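/- If f, g : ℝ^N → [0,∞) are cylinder-like convex functions, then the pointwise maximum max(f, g) is a cylinder-like convex function. -/

import Mathlib

open MeasureTheory Metric Set
open scoped ENNReal

noncomputable section

abbrev Euc (N : ℕ) := EuclideanSpace ℝ (Fin N)

/-- A convex function `g : ℝ^N → [0,∞)` is cylinder-like if for every `x̄ ≠ ȳ` with
`g x̄ = g ȳ` there are `ε > 0`, `δ > 0` such that `g (x - ε(x̄ - ȳ)) ≤ g x` on `B_δ(x̄)`
and `g (y + ε(x̄ - ȳ)) ≤ g y` on `B_δ(ȳ)`. -/
def IsCylinderLike {N : ℕ} (g : Euc N → ℝ) : Prop :=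
  ∀ xb yb : Euc N, xb ≠ yb → g xb = g yb →
    ∃ ε > (0 : ℝ), ∃ δ > (0 : ℝ),
      (∀ x ∈ Metric.ball xb δ, g (x - ε • (xb - yb)) ≤ g x) ∧
      (∀ y ∈ Metric.ball yb δ, g (y + ε • (xb - yb)) ≤ g y)

/-!
For a continuous convex function `f`, being cylinder-like means that whenever `f y ≤ f x`, all
sufficiently short steps in the direction `y - x`, started anywhere near `x`, do not increase `f`:
by convexity a step may be shortened, and when `f y < f x` the full step `y - x` works by
continuity. This one-sided form passes to `max f g`: a direction towards a point where the maximum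
is not larger is such a direction for each function attaining the maximum at `x`, while a function
strictly below the maximum at `x` stays below it for short steps.
-/

open Filter Topology

section Segment

variable {𝕜 E β : Type*} [Field 𝕜] [LinearOrder 𝕜] [IsStrictOrderedRing 𝕜]
  [AddCommGroup E] [Module 𝕜 E]
  [AddCommMonoid β] [PartialOrder β] [IsOrderedAddMonoid β] [Module 𝕜 β] [PosSMulMono 𝕜 β]

lemma add_smul_mem_segment {x v : E} {t ε : 𝕜} (ht : 0 ≤ t) (htε : t ≤ ε) :
    x + t • v ∈ segment 𝕜 x (x + ε • v) := by
  rw [segment_eq_image']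
  refine ⟨t / ε, ⟨div_nonneg ht (ht.trans htε), div_le_one_of_le₀ htε (ht.trans htε)⟩, ?_⟩
  have ht_zero : ε = 0 → t = 0 := fun hε => le_antisymm (htε.trans hε.le) ht
  simp only [add_sub_cancel_left, smul_smul, div_mul_cancel_of_imp ht_zero]

lemma convexOn_add_smul_le_of_le {s : Set E} {f : E → β} (hf : ConvexOn 𝕜 s f) {x v : E} {t ε : 𝕜}
    (hx : x ∈ s) (hxε : x + ε • v ∈ s) (ht : 0 ≤ t) (htε : t ≤ ε) (h : f (x + ε • v) ≤ f x) :
    f (x + t • v) ≤ f x :=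
  ((hf.convex_le (f x)).segment_subset ⟨hx, le_rfl⟩ ⟨hxε, h⟩ (add_smul_mem_segment ht htε)).2

end Segment

section TopologicalVectorSpace

variable {E β : Type*} [AddCommGroup E] [Module ℝ E] [TopologicalSpace E]

/-- `v` is a local descent direction of `f` at `x` if every sufficiently short step along `v` does
not increase `f` near `x`. The neighbourhood of `x` may depend on the length of the step. -/
def IsLocalDescentDirection [LE β] (f : E → β) (x v : E) : Prop :=
  ∀ᶠ ε : ℝ in 𝓝[>] 0, ∀ᶠ z in 𝓝 x, f (z + ε • v) ≤ f z

/-- The cylinder-like functions on a real topological vector space, with neighbourhoods in place of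
the balls of `IsCylinderLike`. The case `x = y` is allowed, being trivially satisfied. -/
def IsTopologicallyCylinderLike (f : E → ℝ) : Prop :=
  ∀ x y : E, f x = f y → ∃ ε > (0 : ℝ),
    (∀ᶠ z in 𝓝 x, f (z + ε • (y - x)) ≤ f z) ∧ (∀ᶠ z in 𝓝 y, f (z + ε • (x - y)) ≤ f z)

lemma isTopologicallyCylinderLike_of_forall_isLocalDescentDirection {f : E → ℝ}
    (h : ∀ x y, f y ≤ f x → IsLocalDescentDirection f x (y - x)) :
    IsTopologicallyCylinderLike f := by
  intro x y hxy
  obtain ⟨ε, ⟨hx, hy⟩, hε⟩ :=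
    (((h x y hxy.ge).and (h y x hxy.le)).and self_mem_nhdsWithin).exists
  exact ⟨ε, hε, hx, hy⟩

lemma isLocalDescentDirection_of_convexOn {f : E → ℝ} (hf : ConvexOn ℝ univ f) {x v : E} {ε : ℝ}
    (hε : 0 < ε) (h : ∀ᶠ z in 𝓝 x, f (z + ε • v) ≤ f z) : IsLocalDescentDirection f x v := by
  filter_upwards [Ioc_mem_nhdsGT hε] with t ⟨ht, htε⟩
  filter_upwards [h] with z hz
  exact convexOn_add_smul_le_of_le hf (mem_univ _) (mem_univ _) ht.le htε hz

section Continuity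

variable [ContinuousAdd E]

lemma IsTopologicallyCylinderLike.isLocalDescentDirection {f : E → ℝ}
    (hcyl : IsTopologicallyCylinderLike f) (hconv : ConvexOn ℝ univ f) (hcont : Continuous f)
    {x y : E} (hyx : f y ≤ f x) : IsLocalDescentDirection f x (y - x) := by
  rcases hyx.eq_or_lt with heq | hlt
  · obtain ⟨ε, hε, hx, -⟩ := hcyl x y heq.symm
    exact isLocalDescentDirection_of_convexOn hconv hε hx
  · have hstep : Continuous fun z => f (z + (1 : ℝ) • (y - x)) := by fun_prop
    have hlt_near : ∀ᶠ z in 𝓝 x, f (z + (1 : ℝ) • (y - x)) < f z :=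
      hstep.continuousAt.eventually_lt hcont.continuousAt (by simpa using hlt)
    exact isLocalDescentDirection_of_convexOn hconv one_pos (hlt_near.mono fun _ => le_of_lt)

variable [ContinuousSMul ℝ E] [LinearOrder β] [TopologicalSpace β] [OrderClosedTopology β]
  {f g : E → β} {x v : E}

lemma eventually_add_smul_lt (hf : ContinuousAt f x) (hg : ContinuousAt g x) (hfg : f x < g x) :
    ∀ᶠ ε : ℝ in 𝓝 0, ∀ᶠ z in 𝓝 x, f (z + ε • v) < g z := by
  have hstep : Tendsto (fun p : ℝ × E => p.2 + p.1 • v) (𝓝 0 ×ˢ 𝓝 x) (𝓝 x) := by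
    rw [← nhds_prod_eq]
    exact Continuous.tendsto' (by fun_prop) _ _ (by simp)
  exact ((hf.tendsto.comp hstep).eventually_lt (hg.tendsto.comp tendsto_snd) hfg).curry

lemma IsLocalDescentDirection.max_of_lt (hgv : IsLocalDescentDirection g x v)
    (hf : ContinuousAt f x) (hg : ContinuousAt g x) (hfg : f x < g x) :
    IsLocalDescentDirection (fun z => max (f z) (g z)) x v := by
  filter_upwards [hgv, nhdsWithin_le_nhds (eventually_add_smul_lt (v := v) hf hg hfg)]
    with ε hgε hfε
  filter_upwards [hgε, hfε] with z hgz hfz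
  exact (max_le hfz.le hgz).trans (le_max_right _ _)

lemma isLocalDescentDirection_max (hf : ContinuousAt f x) (hg : ContinuousAt g x)
    (hfv : g x ≤ f x → IsLocalDescentDirection f x v)
    (hgv : f x ≤ g x → IsLocalDescentDirection g x v) :
    IsLocalDescentDirection (fun z => max (f z) (g z)) x v := by
  rcases lt_trichotomy (f x) (g x) with hlt | heq | hgt
  · exact (hgv hlt.le).max_of_lt hf hg hlt
  · filter_upwards [hfv heq.ge, hgv heq.le] with ε hfε hgε
    filter_upwards [hfε, hgε] with z hfz hgz
    exact max_le_max hfz hgz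
  · simpa only [max_comm] using (hfv hgt.le).max_of_lt hg hf hgt

end Continuity

theorem max_isCylinderLike_general [ContinuousAdd E] [ContinuousSMul ℝ E] {f g : E → ℝ}
    (hfconv : ConvexOn ℝ univ f) (hfcont : Continuous f) (hfcyl : IsTopologicallyCylinderLike f)
    (hgconv : ConvexOn ℝ univ g) (hgcont : Continuous g) (hgcyl : IsTopologicallyCylinderLike g) :
    ConvexOn ℝ univ (fun x => max (f x) (g x)) ∧
      IsTopologicallyCylinderLike (fun x => max (f x) (g x)) := by
  refine ⟨hfconv.sup hgconv,
    isTopologicallyCylinderLike_of_forall_isLocalDescentDirection fun x y hyx => ?_⟩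
  refine isLocalDescentDirection_max hfcont.continuousAt hgcont.continuousAt
    (fun hgf => ?_) (fun hfg => ?_)
  · have hfyx : f y ≤ f x := (le_max_left _ _).trans (hyx.trans (max_eq_left hgf).le)
    exact hfcyl.isLocalDescentDirection hfconv hfcont hfyx
  · have hgyx : g y ≤ g x := (le_max_right _ _).trans (hyx.trans (max_eq_right hfg).le)
    exact hgcyl.isLocalDescentDirection hgconv hgcont hgyx

end TopologicalVectorSpace

lemma isCylinderLike_iff_isTopologicallyCylinderLike {N : ℕ} {f : Euc N → ℝ} :
    IsCylinderLike f ↔ IsTopologicallyCylinderLike f := by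
  have hsub (x y z : Euc N) (ε : ℝ) : z - ε • (x - y) = z + ε • (y - x) := by
    rw [← neg_sub y x, smul_neg, sub_neg_eq_add]
  simp only [IsCylinderLike, IsTopologicallyCylinderLike, hsub]
  constructor
  · intro h x y hxy
    rcases eq_or_ne x y with rfl | hne
    · exact ⟨1, one_pos, by simp⟩
    · obtain ⟨ε, hε, δ, hδ, hx, hy⟩ := h x y hne hxy
      exact ⟨ε, hε, eventually_nhds_iff_ball.2 ⟨δ, hδ, hx⟩, eventually_nhds_iff_ball.2 ⟨δ, hδ, hy⟩⟩
  · intro h x y _ hxy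
    obtain ⟨ε, hε, hx, hy⟩ := h x y hxy
    obtain ⟨δx, hδx, hx⟩ := eventually_nhds_iff_ball.1 hx
    obtain ⟨δy, hδy, hy⟩ := eventually_nhds_iff_ball.1 hy
    exact ⟨ε, hε, min δx δy, lt_min hδx hδy,
      fun z hz => hx z (ball_subset_ball (min_le_left _ _) hz),
      fun z hz => hy z (ball_subset_ball (min_le_right _ _) hz)⟩

theorem max_isCylinderLike {N : ℕ} (f g : Euc N → ℝ)
    (hfconv : ConvexOn ℝ Set.univ f) (hfnonneg : ∀ x, 0 ≤ f x) (hfcyl : IsCylinderLike f)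
    (hgconv : ConvexOn ℝ Set.univ g) (hgnonneg : ∀ x, 0 ≤ g x) (hgcyl : IsCylinderLike g) :
    ConvexOn ℝ Set.univ (fun x => max (f x) (g x)) ∧
      (∀ x, 0 ≤ max (f x) (g x)) ∧
      IsCylinderLike (fun x => max (f x) (g x)) := by
  rw [isCylinderLike_iff_isTopologicallyCylinderLike] at hfcyl hgcyl ⊢
  obtain ⟨hconv, hcyl⟩ := max_isCylinderLike_general
    hfconv (continuousOn_univ.1 (hfconv.continuousOn isOpen_univ)) hfcyl
    hgconv (continuousOn_univ.1 (hgconv.continuousOn isOpen_univ)) hgcyl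
  exact ⟨hconv, fun x => le_max_of_le_left (hfnonneg x), hcyl⟩
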